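/- For all finite subsets U ⊆ V ⊆ S and every w ∈ S with w ∉ V, the difference of the marginal gains satisfies (G(U ∪ {w}) − G(U)) − (G(V ∪ {w}) − G(V)) = λ · Σ_{v ∈ V \ U} max(γ(v,w), γ(w,v)). -/

import Mathlib

/-- The strategic-state objective of the paper (equation (3)):
`G(U) = Σ_{g ∈ U} C(g) − λ · Σ_{{u,v} unordered pair of distinct elements of U} max(γ(u,v), γ(v,u))`.
Since `max (γ u v) (γ v u)` is symmetric in `u, v`, the sum over unordered pairs of distinct
elements equals half the sum over ordered pairs of distinct elements. -/
noncomputable def stratObj {S : Type*} [DecidableEq S] (C : S → ℝ) (γ : S → S → ℝ)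
    (lam : ℝ) (U : Finset S) : ℝ :=
  (∑ g ∈ U, C g) - lam * ((∑ u ∈ U, ∑ v ∈ U.erase u, max (γ u v) (γ v u)) / 2)

theorem sum_sum_erase_insert {S M : Type*} [DecidableEq S] [AddCommMonoid M] (f : S → S → M)
    {U : Finset S} {w : S} (hw : w ∉ U) :
    ∑ u ∈ insert w U, ∑ v ∈ (insert w U).erase u, f u v =
      ∑ v ∈ U, f w v + (∑ u ∈ U, f u w + ∑ u ∈ U, ∑ v ∈ U.erase u, f u v) := by
  have sum_erase_insert (u : S) (hu : u ∈ U) :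
      ∑ v ∈ (insert w U).erase u, f u v = f u w + ∑ v ∈ U.erase u, f u v := by
    rw [Finset.erase_insert_of_ne (ne_of_mem_of_not_mem hu hw).symm,
      Finset.sum_insert (mt Finset.mem_of_mem_erase hw)]
  rw [Finset.sum_insert hw, Finset.erase_insert hw, Finset.sum_congr rfl sum_erase_insert,
    Finset.sum_add_distrib]

theorem stratObj_insert_sub_stratObj {S : Type*} [DecidableEq S] (C : S → ℝ) (γ : S → S → ℝ)
    (lam : ℝ) {U : Finset S} {w : S} (hw : w ∉ U) :
    stratObj C γ lam (insert w U) - stratObj C γ lam U =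
      C w - lam * ∑ v ∈ U, max (γ v w) (γ w v) := by
  have sum_max_comm : ∑ v ∈ U, max (γ w v) (γ v w) = ∑ v ∈ U, max (γ v w) (γ w v) :=
    Finset.sum_congr rfl fun _ _ => max_comm _ _
  rw [stratObj, stratObj, Finset.sum_insert hw,
    sum_sum_erase_insert (fun u v => max (γ u v) (γ v u)) hw, sum_max_comm]
  ring

/-- Equation (6) of the paper: the difference of the marginal gains of `w` at `U` and at `V`
is exactly `λ` times the sum of the pairwise distances over `V \ U`. -/
theorem stratObj_gain_difference {S : Type*} [DecidableEq S] (C : S → ℝ) (γ : S → S → ℝ)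
    (lam : ℝ) (U V : Finset S) (hUV : U ⊆ V) (w : S) (hw : w ∉ V) :
    (stratObj C γ lam (insert w U) - stratObj C γ lam U) -
        (stratObj C γ lam (insert w V) - stratObj C γ lam V) =
      lam * ∑ v ∈ V \ U, max (γ v w) (γ w v) := by
  rw [stratObj_insert_sub_stratObj C γ lam (Finset.notMem_mono hUV hw),
    stratObj_insert_sub_stratObj C γ lam hw, Finset.sum_sdiff_eq_sub hUV]
  ring
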